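/- Let G be a finite group acting freely on a connected finite poset 𝒫 (g(x) ≠ x for all x ∈ 𝒫 and all nonidentity g ∈ G). If there exist distinct elements x, y, z ∈ 𝒫 with y and z in the same G-orbit such that either x < y and x < z, or x > y and x > z, then the transporter category 𝒯 = G ∝ 𝒫 is of infinite representation type. -/

import Mathlib

set_option maxHeartbeats 1000000
set_option linter.unusedSectionVars false
set_option linter.unusedVariables false

noncomputable section
open Finset
open scoped Classical


section CoreSGA

variable {k : Type} [CommRing k] {Λ : Type} [Ring Λ] [Algebra k Λ]
variable {G : Type} [Group G] [Fintype G]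

/-- The skew group algebra `Λ ⊗_k kG` (as functions `G → Λ`), with multiplication
`(λ ⊗ g) ⬝ (μ ⊗ h) = λ · g(μ) ⊗ gh`. -/
structure SGA (σ : G →* (Λ ≃ₐ[k] Λ)) : Type where
  toFun : G → Λ

namespace SGA

variable {σ : G →* (Λ ≃ₐ[k] Λ)}

@[simp] lemma mk_toFun (f : G → Λ) : (SGA.mk f : SGA σ).toFun = f := rfl

@[ext] lemma ext {f h : SGA σ} (w : ∀ g, f.toFun g = h.toFun g) : f = h := by
  cases f; cases h; simp only [mk.injEq]; funext g; exact w g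

/-- The underlying-function equivalence. -/
def equivFun : SGA σ ≃ (G → Λ) := ⟨toFun, mk, fun _ => rfl, fun _ => rfl⟩

instance : AddCommGroup (SGA σ) := (equivFun (σ := σ)).addCommGroup

@[simp] lemma toFun_add (f h : SGA σ) (g : G) : (f + h).toFun g = f.toFun g + h.toFun g := rfl
@[simp] lemma toFun_zero (g : G) : (0 : SGA σ).toFun g = 0 := rfl
@[simp] lemma toFun_neg (f : SGA σ) (g : G) : (-f).toFun g = -(f.toFun g) := rfl

instance : Mul (SGA σ) :=
  ⟨fun f h => ⟨fun x => ∑ g : G, f.toFun g * σ g (h.toFun (g⁻¹ * x))⟩⟩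

instance : One (SGA σ) := ⟨⟨fun x => if x = 1 then 1 else 0⟩⟩

@[simp] lemma toFun_mul (f h : SGA σ) (x : G) :
    (f * h).toFun x = ∑ g : G, f.toFun g * σ g (h.toFun (g⁻¹ * x)) := rfl

lemma toFun_one (x : G) : (1 : SGA σ).toFun x = if x = 1 then 1 else 0 := rfl

protected lemma one_mul (f : SGA σ) : 1 * f = f := by
  ext x
  rw [toFun_mul]
  rw [Finset.sum_eq_single (1 : G)]
  · simp [toFun_one]
  · intro b _ hb
    simp [toFun_one, hb]
  · simp

protected lemma mul_one (f : SGA σ) : f * 1 = f := by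
  ext x
  rw [toFun_mul]
  rw [Finset.sum_eq_single (x : G)]
  · simp [toFun_one]
  · intro b _ hb
    have : b⁻¹ * x ≠ 1 := by
      intro hc
      rw [inv_mul_eq_one] at hc
      exact hb hc
    simp [toFun_one, this]
  · simp

protected lemma mul_assoc (f h e : SGA σ) : f * h * e = f * (h * e) := by
  ext x
  rw [toFun_mul, toFun_mul]
  simp only [toFun_mul, Finset.sum_mul, map_sum, Finset.mul_sum, map_mul]
  rw [Finset.sum_comm]
  refine Finset.sum_congr rfl fun u _ => ?_
  rw [← Fintype.sum_equiv (Equiv.mulLeft u)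
    (fun v => f.toFun u * σ u (h.toFun v) * σ (u * v) (e.toFun ((u * v)⁻¹ * x)))
    (fun g => f.toFun u * σ u (h.toFun (u⁻¹ * g)) * σ g (e.toFun (g⁻¹ * x)))
    (fun v => by simp [Equiv.mulLeft])]
  refine Finset.sum_congr rfl fun v _ => ?_
  have h3 : (u * v)⁻¹ * x = v⁻¹ * (u⁻¹ * x) := by group
  have h4 : σ u (σ v (e.toFun (v⁻¹ * (u⁻¹ * x)))) = σ (u * v) (e.toFun (v⁻¹ * (u⁻¹ * x))) := by
    rw [map_mul σ]; rfl
  rw [h3, ← h4, mul_assoc]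

protected lemma left_distrib (f h e : SGA σ) : f * (h + e) = f * h + f * e := by
  ext x
  simp [mul_add, Finset.sum_add_distrib]

protected lemma right_distrib (f h e : SGA σ) : (f + h) * e = f * e + h * e := by
  ext x
  simp [add_mul, Finset.sum_add_distrib]

protected lemma zero_mul (f : SGA σ) : 0 * f = 0 := by
  ext x; simp

protected lemma mul_zero (f : SGA σ) : f * 0 = 0 := by
  ext x; simp

instance instRing : Ring (SGA σ) :=
  { (inferInstance : AddCommGroup (SGA σ)),
    (inferInstance : Mul (SGA σ)), (inferInstance : One (SGA σ)) with
    mul_assoc := SGA.mul_assoc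
    one_mul := SGA.one_mul
    mul_one := SGA.mul_one
    left_distrib := SGA.left_distrib
    right_distrib := SGA.right_distrib
    zero_mul := SGA.zero_mul
    mul_zero := SGA.mul_zero }

/-- The canonical inclusion `Λ → ΛG`, `λ ↦ λ ⊗ 1`. -/
def emb (σ : G →* (Λ ≃ₐ[k] Λ)) : Λ →+* SGA σ where
  toFun a := ⟨fun x => if x = 1 then a else 0⟩
  map_one' := rfl
  map_zero' := by ext x; simp
  map_add' a b := by ext x; by_cases hx : x = 1 <;> simp [hx]
  map_mul' a b := by
    ext x
    rw [toFun_mul]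
    rw [Finset.sum_eq_single (1 : G)]
    · by_cases hx : x = 1 <;> simp [hx]
    · intro b' _ hb'; simp [hb']
    · simp

end SGA

end CoreSGA

section GeneralDefs

/-- An idempotent `e` is primitive if it is nonzero and cannot be written as a sum of two
nonzero orthogonal idempotents. -/
def IsPrimitiveIdempotent (A : Type) [Ring A] (e : A) : Prop :=
  IsIdempotentElem e ∧ e ≠ 0 ∧
    ∀ f g : A, IsIdempotentElem f → IsIdempotentElem g → f * g = 0 → g * f = 0 →
      e = f + g → f = 0 ∨ g = 0

/-- A finite family `e : Fin n → A` is a complete set of primitive orthogonal idempotents. -/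
def IsCompletePrimitiveOrthogonalSystem (A : Type) [Ring A] {n : ℕ} (e : Fin n → A) : Prop :=
  (∀ i, IsPrimitiveIdempotent A (e i)) ∧
    (∀ i j, i ≠ j → e i * e j = 0) ∧ (∑ i, e i = 1)

/-- A ring is connected (indecomposable as an algebra) if its only central idempotents
are `0` and `1`. -/
def IsConnectedRing (A : Type) [Ring A] : Prop :=
  Nontrivial A ∧ ∀ e : A, IsIdempotentElem e → (∀ x : A, e * x = x * e) → e = 0 ∨ e = 1

/-- A ring is basic if it admits a complete set of primitive orthogonal idempotents `e i`
such that the indecomposable projective left modules `A e i` are pairwise nonisomorphic. -/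
def IsBasicRing (A : Type) [Ring A] : Prop :=
  ∃ (n : ℕ) (e : Fin n → A), IsCompletePrimitiveOrthogonalSystem A e ∧
    ∀ i j, i ≠ j →
      IsEmpty ((Submodule.span A {e i} : Submodule A A) ≃ₗ[A] (Submodule.span A {e j} : Submodule A A))

/-- `projDimLE A n M` : the `A`-module `M` admits a projective resolution of length at
most `n`, i.e. has projective dimension `≤ n`. -/
def projDimLE (A : Type) [Ring A] (n : ℕ) (M : Type) [AddCommGroup M] [Module A M] : Prop :=
  ∃ (P : ℕ → ModuleCat.{0} A) (d : (i : ℕ) → (P (i + 1) →ₗ[A] P i)) (ε : P 0 →ₗ[A] M),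
    (∀ i, Module.Projective A (P i)) ∧
    Function.Surjective ε ∧
    LinearMap.range (d 0) = LinearMap.ker ε ∧
    (∀ i, LinearMap.range (d (i + 1)) = LinearMap.ker (d i)) ∧
    (∀ i, n < i → ∀ x : P i, x = 0)

/-- The (little) global dimension of a ring, as an element of `ℕ∞`: the least `n` such that
every finitely generated `A`-module has projective dimension at most `n` (and `⊤` if there
is no such `n`). -/
noncomputable def globalDim (A : Type) [Ring A] : ℕ∞ :=
  sInf {c : ℕ∞ | ∃ n : ℕ, c = (n : ℕ∞) ∧
    ∀ (M : Type) [AddCommGroup M] [Module A M], Module.Finite A M → projDimLE A n M}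

/-- A module is indecomposable if it is nonzero and is not the internal direct sum of two
nonzero submodules. -/
def IsIndecomposableModule (A : Type) [Ring A] (M : Type) [AddCommGroup M] [Module A M] : Prop :=
  Nontrivial M ∧ ∀ N₁ N₂ : Submodule A M, IsCompl N₁ N₂ → N₁ = ⊥ ∨ N₂ = ⊥

/-- A ring has finite representation type if there are only finitely many isomorphism classes
of finitely generated indecomposable left modules. -/
def FiniteRepType (A : Type) [Ring A] : Prop :=
  ∃ S : Set (Σ m : ℕ, Submodule A (Fin m → A)), S.Finite ∧
    ∀ (M : Type) [AddCommGroup M] [Module A M], Module.Finite A M →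
      IsIndecomposableModule A M →
        ∃ p ∈ S, Nonempty (M ≃ₗ[A] ((Fin p.1 → A) ⧸ p.2))

/-- Two rings are Morita equivalent if their categories of modules are equivalent. -/
def MoritaEquivalent (A B : Type) [Ring A] [Ring B] : Prop :=
  Nonempty (ModuleCat.{0} A ≌ ModuleCat.{0} B)

/-- An Auslander algebra: global dimension at most `2`, and there is an exact sequence
`0 → A → I₀ → I₁` with `I₀`, `I₁` both projective and injective (equivalently, in a minimal
injective resolution `0 → A → I₀ → I₁ → I₂ → 0` the terms `I₀` and `I₁` are projective). -/
def IsAuslanderAlgebra (A : Type) [Ring A] : Prop :=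
  globalDim A ≤ 2 ∧
    ∃ (I₀ I₁ : ModuleCat.{0} A) (f : A →ₗ[A] I₀) (g : I₀ →ₗ[A] I₁),
      Module.Injective A I₀ ∧ Module.Projective A I₀ ∧
      Module.Injective A I₁ ∧ Module.Projective A I₁ ∧
      Function.Injective f ∧ LinearMap.ker g = LinearMap.range f

/-- The `i`-th power of a left ideal (with `I ^ 0 = ⊤`). -/
def leftIdealPow (A : Type) [Ring A] (I : Submodule A A) : ℕ → Submodule A A
  | 0 => ⊤
  | n + 1 => Submodule.span A {x : A | ∃ a ∈ I, ∃ b ∈ leftIdealPow A I n, x = a * b}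

end GeneralDefs
section IncidenceAlgebra

variable (k : Type) [CommRing k] (P : Type) [Fintype P] [PartialOrder P] [DecidableEq P]

/-- The incidence algebra of a finite poset `P` over `k`, realized as the subalgebra of
`P × P`-matrices supported on pairs `x ≤ y`. -/
def IncidenceAlg : Subalgebra k (Matrix P P k) where
  carrier := {M : Matrix P P k | ∀ x y : P, ¬ x ≤ y → M x y = 0}
  mul_mem' := fun {M N} hM hN => by
    intro x y hxy
    rw [Matrix.mul_apply]
    refine Finset.sum_eq_zero fun z _ => ?_
    by_cases hxz : x ≤ z
    · have hzy : ¬ z ≤ y := fun h => hxy (le_trans hxz h)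
      rw [hN z y hzy, mul_zero]
    · rw [hM x z hxz, zero_mul]
  one_mem' := fun x y hxy =>
    Matrix.one_apply_ne (fun h => hxy (le_of_eq h))
  add_mem' := fun {M N} hM hN x y hxy => by
    show M x y + N x y = 0
    rw [hM x y hxy, hN x y hxy, add_zero]
  zero_mem' := fun x y _ => rfl
  algebraMap_mem' := fun c x y hxy => by
    rw [Matrix.algebraMap_matrix_apply, if_neg (fun h => hxy (le_of_eq h))]

variable {k P}

/-- The algebra automorphism of the incidence algebra induced by an order automorphism
of the poset. -/
def incAut (e : P ≃o P) : (IncidenceAlg k P) ≃ₐ[k] (IncidenceAlg k P) where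
  toFun M := ⟨fun x y => (M : Matrix P P k) (e.symm x) (e.symm y),
    fun x y hxy => M.2 _ _ (fun h => hxy (e.symm.le_iff_le.mp h))⟩
  invFun M := ⟨fun x y => (M : Matrix P P k) (e x) (e y),
    fun x y hxy => M.2 _ _ (fun h => hxy (e.le_iff_le.mp h))⟩
  left_inv M := Subtype.ext (by funext x y; simp)
  right_inv M := Subtype.ext (by funext x y; simp)
  map_add' M N := Subtype.ext (by funext x y; rfl)
  map_mul' M N := Subtype.ext (by
    funext x y
    simp only [MulMemClass.coe_mul]
    rw [Matrix.mul_apply]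
    exact (Equiv.sum_comp (e.symm.toEquiv)
      (fun z => (M : Matrix P P k) (e.symm x) z * (N : Matrix P P k) z (e.symm y))).symm)
  commutes' c := Subtype.ext (by
    funext x y
    show algebraMap k (Matrix P P k) c (e.symm x) (e.symm y)
      = algebraMap k (Matrix P P k) c x y
    rw [Matrix.algebraMap_matrix_apply, Matrix.algebraMap_matrix_apply]
    by_cases h : x = y
    · subst h; simp
    · rw [if_neg (fun hc => h (e.symm.injective hc)), if_neg h])

/-- The action of a group of order automorphisms of `P` on the incidence algebra. -/
def incRep {G : Type} [Group G] (ρ : G →* (P ≃o P)) :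
    G →* ((IncidenceAlg k P) ≃ₐ[k] (IncidenceAlg k P)) :=
  MonoidHom.mk' (fun g => incAut (ρ g)) (by
    intro g h
    apply AlgEquiv.ext
    intro M
    apply Subtype.ext
    funext x y
    show (M : Matrix P P k) ((ρ (g * h)).symm x) ((ρ (g * h)).symm y) = _
    rw [map_mul ρ]
    rfl)

/-- A poset is connected if any two elements are linked by a chain of comparabilities. -/
def PosetConnected (P : Type) [PartialOrder P] : Prop :=
  ∀ x y : P, Relation.ReflTransGen (fun a b : P => a ≤ b ∨ b ≤ a) x y

end IncidenceAlgebra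
section ForkProof

/-- Abstract criterion: a "Kronecker corner" in a ring gives infinite representation type. -/
theorem fork_abstract {k A : Type} [Field k] [Infinite k] [Ring A] (s : k →+* A)
    (hs : ∀ (c : k) (r : A), s c * r = r * s c) (e f u v : A)
    (he : e * e = e) (he0 : e ≠ 0)
    (hfu : f * u = u) (hfv : f * v = v) (hue : u * e = u) (hve : v * e = v)
    (h1 : ∀ r, ∃ c : k, e * r * e = s c * e) (h2 : ∀ r, ∃ c : k, f * r * f = s c * f)
    (h3 : ∀ r, e * r * f = 0)
    (h4 : ∀ l m b : k, u - s l * v = s b * (u - s m * v) → l = m) :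
    ¬ FiniteRepType A := by
  set w : k → A := fun l => u - s l * v with hw
  have hfw : ∀ l, f * w l = w l := fun l => by
    simp only [hw]; rw [mul_sub, ← mul_assoc, ← hs, mul_assoc, hfu, hfv]
  have hwe : ∀ l, w l * e = w l := fun l => by
    simp only [hw]; rw [sub_mul, mul_assoc, hue, hve]
  let L : k → Submodule A A := fun l => Submodule.span A {1 - e, w l}
  have memL : ∀ l r, r ∈ L l ↔ ∃ a b, a * (1 - e) + b * w l = r := fun l r => by
    simp only [L, Submodule.mem_span_pair, smul_eq_mul]
  have hee : (1 - e) * e = 0 := by rw [sub_mul, one_mul, he, sub_self]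
  let o : ∀ l, A ⧸ L l := fun l => (L l).mkQ 1
  have hmk : ∀ l r, (L l).mkQ r = r • o l := fun l r => by
    simp only [o]; rw [← map_smul, smul_eq_mul, mul_one]
  have ho0 : ∀ l r, r • o l = 0 ↔ r ∈ L l := fun l r => by
    rw [← hmk, Submodule.mkQ_apply, Submodule.Quotient.mk_eq_zero]
  have heo : ∀ l, e • o l = o l := fun l => by
    have : (1 - e) • o l = 0 := (ho0 l _).2 (Submodule.subset_span (by simp))
    rw [sub_smul, one_smul, sub_eq_zero] at this
    exact this.symm
  have hwo : ∀ l, w l • o l = 0 := fun l => (ho0 l _).2 (Submodule.subset_span (by simp))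
  have hone : ∀ l, o l ≠ 0 := fun l h => by
    have h' : (1 : A) • o l = 0 := by rw [one_smul, h]
    obtain ⟨a, b, hab⟩ := (memL _ _).1 ((ho0 l 1).1 h')
    apply he0
    calc e = e * 1 * e := by rw [mul_one, he]
      _ = e * (a * (1 - e) + b * w l) * e := by rw [hab]
      _ = e * a * ((1 - e) * e) + (e * b * f) * w l * e := by
          rw [mul_assoc (e * b) f, hfw]; noncomm_ring
      _ = 0 := by rw [hee, h3]; simp
  have hex : ∀ l (n : A ⧸ L l), e • n = n → ∃ c : k, n = s c • o l := fun l n hn => by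
    obtain ⟨r, rfl⟩ := (L l).mkQ_surjective n
    obtain ⟨c, hc⟩ := h1 r
    refine ⟨c, ?_⟩
    rw [← hn, hmk]
    conv_lhs => rw [← heo l]
    rw [smul_smul, smul_smul, hc, ← smul_smul, heo]
  have hsc : ∀ {c : k} {M : Type} [AddCommGroup M] [Module A M] (m : M), c ≠ 0 →
      s c⁻¹ • s c • m = m := by
    intro c M _ _ m hc
    rw [smul_smul, ← map_mul, inv_mul_cancel₀ hc, map_one, one_smul]
  have htop : ∀ l (N : Submodule A (A ⧸ L l)), o l ∈ N → N = ⊤ := fun l N hN => by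
    rw [eq_top_iff]
    rintro n -
    obtain ⟨r, rfl⟩ := (L l).mkQ_surjective n
    rw [hmk]
    exact N.smul_mem _ hN
  have hind : ∀ l, IsIndecomposableModule A (A ⧸ L l) := by
    intro l
    refine ⟨⟨o l, 0, hone l⟩, fun N₁ N₂ hN => ?_⟩
    obtain ⟨n₁, hn₁, n₂, hn₂, hsum⟩ := Submodule.mem_sup.1
      (show o l ∈ N₁ ⊔ N₂ by rw [hN.sup_eq_top]; trivial)
    have hn : e • n₁ = n₁ := by
      have h := heo l
      rw [← hsum, smul_add] at h
      have h' : e • n₁ - n₁ = n₂ - e • n₂ := by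
        rw [sub_eq_sub_iff_add_eq_add, h, add_comm]
      have hm : e • n₁ - n₁ ∈ N₁ ⊓ N₂ :=
        ⟨N₁.sub_mem (N₁.smul_mem _ hn₁) hn₁, by
          rw [h']; exact N₂.sub_mem hn₂ (N₂.smul_mem _ hn₂)⟩
      rw [hN.inf_eq_bot, Submodule.mem_bot] at hm
      exact sub_eq_zero.1 hm
    obtain ⟨c, hc⟩ := hex l n₁ hn
    by_cases hc0 : c = 0
    · left
      have : N₂ = ⊤ := htop l N₂ (by
        rw [← hsum, hc, hc0, map_zero, zero_smul, zero_add]; exact hn₂)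
      have h := hN.inf_eq_bot
      rwa [this, inf_top_eq] at h
    · right
      have : N₁ = ⊤ := htop l N₁ (by
        rw [← hsc (o l) hc0, ← hc]; exact N₁.smul_mem _ hn₁)
      have h := hN.inf_eq_bot
      rwa [this, top_inf_eq] at h
  have hiso : ∀ l m, Nonempty ((A ⧸ L l) ≃ₗ[A] (A ⧸ L m)) → l = m := by
    rintro l m ⟨φ⟩
    have hn : e • φ (o l) = φ (o l) := by rw [← map_smul, heo]
    obtain ⟨c, hc⟩ := hex m _ hn
    have hc0 : c ≠ 0 := by
      rintro rfl
      rw [map_zero, zero_smul] at hc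
      exact hone l (φ.map_eq_zero_iff.1 hc)
    have hz : w l • o m = 0 := by
      rw [← hsc (o m) hc0, ← hc, smul_smul, ← hs, ← smul_smul, ← map_smul, hwo, map_zero,
        smul_zero]
    obtain ⟨a, b, hab⟩ := (memL _ _).1 ((ho0 _ _).1 hz)
    obtain ⟨β, hβ⟩ := h2 b
    refine h4 l m β ?_
    change w l = s β * w m
    calc w l = f * w l * e := by rw [hfw, hwe]
      _ = f * a * ((1 - e) * e) + (f * b * f) * w m * e := by
          rw [← hab, mul_assoc (f * b) f, hfw]; noncomm_ring
      _ = s β * w m := by rw [hee, hβ, mul_zero, zero_add, mul_assoc (s β), hfw, mul_assoc, hwe]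
  rintro ⟨S, hS, h⟩
  choose q hq hqi using fun l => h (A ⧸ L l) inferInstance (hind l)
  have : Finite S := hS
  obtain ⟨l, m, hlm, heq⟩ := Finite.exists_ne_map_eq_of_infinite (fun l => (⟨q l, hq l⟩ : S))
  have heq' : q l = q m := congrArg Subtype.val heq
  refine hlm (hiso l m ?_)
  obtain ⟨φ⟩ := hqi l
  obtain ⟨ψ⟩ := hqi m
  rw [← heq'] at ψ
  exact ⟨φ.trans ψ.symm⟩

section
variable {k : Type} [CommRing k] {Λ : Type} [Ring Λ] [Algebra k Λ]
variable {G : Type} [Group G] [Fintype G] {σ : G →* (Λ ≃ₐ[k] Λ)}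

lemma SGA.emb_mul_toFun (a : Λ) (r : SGA σ) (g : G) :
    (SGA.emb σ a * r).toFun g = a * r.toFun g := by
  rw [SGA.toFun_mul, Finset.sum_eq_single (1 : G)]
  · simp [SGA.emb]
  · intro b _ hb; simp [SGA.emb, hb]
  · simp

lemma SGA.mul_emb_toFun (a : Λ) (r : SGA σ) (g : G) :
    (r * SGA.emb σ a).toFun g = r.toFun g * σ g a := by
  rw [SGA.toFun_mul, Finset.sum_eq_single g]
  · simp [SGA.emb]
  · intro b _ hb
    have : b⁻¹ * g ≠ 1 := fun hc => hb (inv_mul_eq_one.1 hc)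
    simp [SGA.emb, this]
  · simp
end

variable {k : Type} [Field k] {P : Type} [Fintype P] [PartialOrder P] [DecidableEq P]
variable {G : Type} [Group G] [Fintype G]

/-- Matrix unit in the incidence algebra. -/
def incE (k : Type) [Field k] {P : Type} [Fintype P] [PartialOrder P] [DecidableEq P]
    (a b : P) (h : a ≤ b) : IncidenceAlg k P :=
  ⟨Matrix.single a b 1, fun x y hxy => by
    rw [Matrix.single_apply]; apply if_neg; rintro ⟨rfl, rfl⟩; exact hxy h⟩

lemma incRep_incE (ρ : G →* (P ≃o P)) (g : G) (a b : P) (h : a ≤ b) :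
    incRep (k := k) ρ g (incE k a b h) = incE k (ρ g a) (ρ g b) ((ρ g).le_iff_le.2 h) := by
  apply Subtype.ext
  funext i j
  change Matrix.single a b (1 : k) ((ρ g).symm i) ((ρ g).symm j) =
    Matrix.single (ρ g a) (ρ g b) (1 : k) i j
  simp only [Matrix.single_apply]
  congr 1
  rw [OrderIso.eq_symm_apply, OrderIso.eq_symm_apply]

lemma incE_mul_mul (a b c d : P) (h : a ≤ b) (h' : c ≤ d) (M : IncidenceAlg k P) :
    ((incE k a b h * M * incE k c d h' : IncidenceAlg k P) : Matrix P P k)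
      = Matrix.single a d ((M : Matrix P P k) b c) := by
  change Matrix.single a b 1 * (M : Matrix P P k) * Matrix.single c d 1 = _
  rw [Matrix.single_mul_mul_single]
  simp

lemma incE_mul_incE (a b c : P) (h : a ≤ b) (h' : b ≤ c) :
    incE k a b h * incE k b c h' = incE k a c (h.trans h') := by
  apply Subtype.ext
  change Matrix.single a b (1:k) * Matrix.single b c 1 = Matrix.single a c 1
  simp

lemma corner_toFun (ρ : G →* (P ≃o P)) (a b : P) (r : SGA (incRep (k := k) ρ)) (g : G) :
    (((SGA.emb _ (incE k a a le_rfl) * r * SGA.emb _ (incE k b b le_rfl)).toFun g :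
      IncidenceAlg k P) : Matrix P P k)
      = Matrix.single a (ρ g b) ((r.toFun g : Matrix P P k) a (ρ g b)) := by
  rw [SGA.mul_emb_toFun, SGA.emb_mul_toFun, incRep_incE, incE_mul_mul]

lemma fixed_of_le (ρ : G →* (P ≃o P)) (g : G) (c : P) (h : c ≤ ρ g c) : ρ g c = c := by
  have key : ∀ n : ℕ, ρ g c ≤ ρ (g ^ (n + 1)) c := by
    intro n
    induction n with
    | zero => simp
    | succ n ih =>
      rw [pow_succ', map_mul]
      exact (ρ g).le_iff_le.2 (h.trans ih)
  have h' := key (orderOf g - 1)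
  rw [Nat.sub_add_cancel (orderOf_pos g), pow_orderOf_eq_one, map_one] at h'
  exact le_antisymm h' h

theorem fork_core [Infinite k] (ρ : G →* (P ≃o P))
    (hfree : ∀ g : G, g ≠ 1 → ∀ x : P, ρ g x ≠ x)
    (a c : P) (h : G) (hh : h ≠ 1) (hac : a < c) (hahc : a ≤ ρ h c) :
    ¬ FiniteRepType (SGA (incRep (k := k) ρ)) := by
  have hone : ∀ (c : P) (g : G), c ≤ ρ g c → g = 1 := fun c g hg => by
    by_contra hne
    exact hfree g hne c (fixed_of_le ρ g c hg)
  let σ := incRep (k := k) ρ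
  let s : k →+* SGA σ := (SGA.emb σ).comp (algebraMap k (IncidenceAlg k P))
  have hsl : ∀ (t : k) (r : SGA σ) (g : G), (s t * r).toFun g = t • r.toFun g := fun t r g => by
    simp only [s, RingHom.comp_apply]
    rw [SGA.emb_mul_toFun, Algebra.smul_def]
  have hsr : ∀ (t : k) (r : SGA σ) (g : G), (r * s t).toFun g = t • r.toFun g := fun t r g => by
    simp only [s, RingHom.comp_apply]
    rw [SGA.mul_emb_toFun, AlgEquiv.commutes, Algebra.smul_def, Algebra.commutes]
  let E : P → SGA σ := fun b => SGA.emb σ (incE k b b le_rfl)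
  have hcor : ∀ (b : P) (r : SGA σ), ∃ t : k, E b * r * E b = s t * E b := by
    intro b r
    refine ⟨(r.toFun 1 : Matrix P P k) b b, ?_⟩
    ext g : 1
    apply Subtype.ext
    rw [hsl]
    refine (corner_toFun ρ b b r g).trans ?_
    by_cases hg : g = 1
    · subst hg
      change _ = ((r.toFun 1 : Matrix P P k) b b) •
        (((if (1 : G) = 1 then incE k b b le_rfl else 0) : IncidenceAlg k P) : Matrix P P k)
      simp [incE]
    · have : ¬ b ≤ ρ g b := fun hb => hg (hone b g hb)
      rw [(r.toFun g).2 b _ this]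
      change _ = ((r.toFun 1 : Matrix P P k) b b) •
        (((if g = 1 then incE k b b le_rfl else 0) : IncidenceAlg k P) : Matrix P P k)
      simp [hg]
  have hEE : ∀ b, E b * E b = E b := fun b => by
    simp only [E]; rw [← map_mul, incE_mul_incE]
  let u : SGA σ := SGA.emb σ (incE k a c hac.le)
  let v : SGA σ := ⟨fun g => if g = h then incE k a (ρ h c) hahc else 0⟩
  refine fork_abstract s (fun t r => ?_) (E c) (E a) u v (hEE c) ?_ ?_ ?_ ?_ ?_
    (hcor c) (hcor a) ?_ ?_
  · ext g : 1
    rw [hsl, hsr]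
  · intro h0
    have := congrArg (fun r : SGA σ => (r.toFun 1 : Matrix P P k) c c) h0
    simp [E, SGA.emb, incE] at this
  · simp only [E, u]; rw [← map_mul, incE_mul_incE]
  · ext g : 1
    simp only [E]
    rw [SGA.emb_mul_toFun]
    by_cases hg : g = h
    · simp [v, hg, incE_mul_incE]
    · simp [v, hg]
  · simp only [E, u]; rw [← map_mul, incE_mul_incE]
  · ext g : 1
    simp only [E]
    rw [SGA.mul_emb_toFun]
    by_cases hg : g = h
    · subst hg
      simp only [σ, v, if_true]
      rw [incRep_incE, incE_mul_incE]
    · simp [v, hg]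
  · intro r
    ext g : 1
    apply Subtype.ext
    refine (corner_toFun ρ c a r g).trans ?_
    have : ¬ c ≤ ρ g a := fun hc => by
      have hg : g = 1 := hone c g (hc.trans ((ρ g).le_iff_le.2 hac.le))
      subst hg
      rw [map_one] at hc
      exact absurd hac (not_lt_of_ge hc)
    rw [(r.toFun g).2 c _ this]
    simp
  · intro l m b hb
    have hsub : ∀ (t : k) (g : G) (i j : P), ((u - s t * v).toFun g : Matrix P P k) i j =
        (u.toFun g : Matrix P P k) i j - t * (v.toFun g : Matrix P P k) i j := by
      intro t g i j
      rw [sub_eq_add_neg, SGA.toFun_add, SGA.toFun_neg, hsl]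
      simp [sub_eq_add_neg]
    have hx : ∀ (g : G) (i j : P),
        (u.toFun g : Matrix P P k) i j - l * (v.toFun g : Matrix P P k) i j =
        b * ((u.toFun g : Matrix P P k) i j - m * (v.toFun g : Matrix P P k) i j) := by
      intro g i j
      rw [← hsub, ← hsub, hb, hsl]
      simp
    have e1 := hx 1 a c
    have e2 := hx h a (ρ h c)
    simp [u, v, SGA.emb, incE, hh, Ne.symm hh] at e1 e2
    rw [← e1] at e2
    simpa using e2

end ForkProof

/-- Let `G` be a finite group acting freely on a connected finite poset `𝒫`.
If there exist distinct elements `x, y, z` with `y, z` in the same `G`-orbit such that either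
`x < y` and `x < z`, or `x > y` and `x > z`, then the transporter category `𝒯 = G ∝ 𝒫` is of
infinite representation type. -/
theorem transporter_category_fork_infinite_rep_type
    (k : Type) [Field k] [IsAlgClosed k] (p : ℕ) [CharP k p]
    (P : Type) [Fintype P] [PartialOrder P] [DecidableEq P]
    (hconn : PosetConnected P)
    (G : Type) [Group G] [Fintype G] (ρ : G →* (P ≃o P))
    (hfree : ∀ g : G, g ≠ 1 → ∀ x : P, ρ g x ≠ x)
    (x y z : P) (hxy : x ≠ y) (hxz : x ≠ z) (hyz : y ≠ z)
    (horb : ∃ g : G, ρ g z = y)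
    (hrel : (x < y ∧ x < z) ∨ (y < x ∧ z < x)) :
    ¬ FiniteRepType (SGA (incRep (k := k) ρ)) := by
  have : Infinite k := inferInstance
  obtain ⟨g, hg⟩ := horb
  have hg1 : g ≠ 1 := by
    rintro rfl
    rw [map_one] at hg
    exact hyz hg.symm
  rcases hrel with ⟨h1, h2⟩ | ⟨h1, h2⟩
  · refine fork_core ρ hfree x y g⁻¹ (inv_ne_one.2 hg1) h1 ?_
    have hz : ρ g⁻¹ y = z := by
      rw [← hg, ← RelIso.mul_apply, ← map_mul, inv_mul_cancel, map_one]; rfl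
    rw [hz]
    exact h2.le
  · refine fork_core ρ hfree y x g hg1 h1 ?_
    rw [← hg]
    exact (ρ g).le_iff_le.2 h2.le
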